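/- Let Ω, U, λ, u be as in the setting, and let z₀ ∈ Ω be a nonisolated critical point of u, i.e. ∇u(z₀) = 0 and for every ε > 0 there exists w ≠ z₀ with ‖w − z₀‖ < ε and ∇u(w) = 0. Then z₀ is a semi-degenerate critical point: Δu(z₀) ≠ 0 (so the second derivative of u at z₀ is a nonzero symmetric bilinear form), while this second derivative is degenerate, i.e. there exists a nonzero vector v ∈ ℝ² such that D²u(z₀)(v, w) = 0 for every w ∈ ℝ². In particular, the Hessian of u at z₀ has rank exactly one. -/

import Mathlib

/-!
Let `y` be a tangent direction at `z₀` of the critical set of `u`. Differentiating `∇u = 0` along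
this set gives `D²u(z₀)(y, ·) = 0`. Suppose moreover that `Δu(z₀) = 0`, so that `u(z₀) = 0`. If the
derivatives of `u` at `z₀` of order less than `N ≥ 2` vanish, then `A = D^N u(z₀)` is symmetric, is
trace-free because `Δu = -λu`, and satisfies `A(y, …, y, ·) = 0` because `D^(N-1)(∇u)(z₀)` is the
leading term of `∇u`. In dimension two this forces `A = 0`: the trace condition trades two arguments
orthogonal to `y` for two arguments `y`. Hence all derivatives of `u` vanish at `z₀` and `u = 0`.
-/

open Metric Set Filter Topology MeasureTheory

noncomputable section

abbrev E2 := EuclideanSpace ℝ (Fin 2)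

/-- The Laplacian of `u`: the sum of the two pure second partial derivatives. -/
def lap (u : E2 → ℝ) (z : E2) : ℝ :=
  ∑ i : Fin 2, iteratedFDeriv ℝ 2 u z (fun _ => EuclideanSpace.single i 1)

section SymmetricMultilinear

variable {R M N ι : Type*} [CommSemiring R] [AddCommMonoid M] [Module R M] [AddCommMonoid N]
  [Module R N] {n : ℕ}

/-- Symmetry of a multilinear map under all permutations of its arguments, the algebraic property
used of the iterated derivatives of an analytic function. -/
def IsSymmMultilinear (A : MultilinearMap R (fun _ : ι ↦ M) N) : Prop :=
  ∀ (v : ι → M) (σ : Equiv.Perm ι), A (v ∘ σ) = A v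

/-- Trace-freeness: the contraction of `A` in its last two arguments along the family `b` vanishes.
When `b` is an orthonormal basis and `A` is symmetric, this says that the homogeneous polynomial
`x ↦ A (x, …, x)` is harmonic; `b` is explicit so that no inner product on `M` is needed. -/
def IsTraceFree {κ : Type*} [Fintype κ] (b : κ → M)
    (A : MultilinearMap R (fun _ : Fin (n + 2) ↦ M) N) : Prop :=
  ∀ m : Fin n → M, ∑ i, A (Fin.snoc (Fin.snoc m (b i)) (b i)) = 0

lemma IsSymmMultilinear.curryLeft {A : MultilinearMap R (fun _ : Fin (n + 1) ↦ M) N}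
    (hA : IsSymmMultilinear A) (x : M) : IsSymmMultilinear (A.curryLeft x) := by
  intro v σ
  have hcons : (Fin.cons x (v ∘ σ) : Fin (n + 1) → M) =
      Fin.cons x v ∘ Equiv.Perm.decomposeFin.symm (0, σ) := by
    ext i
    cases i using Fin.cases <;> simp
  simp only [MultilinearMap.curryLeft_apply]
  rw [hcons, hA]

lemma IsTraceFree.curryLeft {κ : Type*} [Fintype κ] {b : κ → M}
    {A : MultilinearMap R (fun _ : Fin (n + 3) ↦ M) N} (hA : IsTraceFree b A) (x : M) :
    IsTraceFree b (A.curryLeft x) := by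
  intro m
  simpa only [MultilinearMap.curryLeft_apply, Fin.cons_snoc_eq_snoc_cons] using hA (Fin.cons x m)

lemma IsSymmMultilinear.apply_eq_zero_of_curryLeft_eq_zero
    {A : MultilinearMap R (fun _ : Fin (n + 1) ↦ M) N} (hA : IsSymmMultilinear A)
    {v : Fin (n + 1) → M} {i : Fin (n + 1)} (h : A.curryLeft (v i) = 0) : A v = 0 := by
  rw [← hA v (Equiv.swap 0 i), ← Fin.cons_self_tail (v ∘ Equiv.swap 0 i)]
  simpa using DFunLike.congr_fun h (Fin.tail (v ∘ Equiv.swap 0 i))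

lemma IsSymmMultilinear.eq_zero_of_isTraceFree_of_curryLeft_eq_zero
    {A : MultilinearMap R (fun _ : Fin (n + 2) ↦ M) N} (hA : IsSymmMultilinear A)
    (b : Module.Basis (Fin 2) R M) (htr : IsTraceFree b A) (h : A.curryLeft (b 0) = 0) :
    A = 0 := by
  refine Module.Basis.ext_multilinear (fun _ ↦ b) fun s ↦ ?_
  by_cases hs : ∃ i, s i = 0
  · obtain ⟨i, hi⟩ := hs
    exact hA.apply_eq_zero_of_curryLeft_eq_zero (i := i) (by rwa [hi])
  · have hs1 : (fun i ↦ b (s i)) = Fin.snoc (Fin.snoc (fun _ : Fin n ↦ b 1) (b 1)) (b 1) := by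
      funext j
      rw [Fin.eq_one_of_ne_zero (s j) fun hj ↦ hs ⟨j, hj⟩]
      cases j using Fin.lastCases with
      | last => simp
      | cast j => cases j using Fin.lastCases <;> simp
    have h0 : A (Fin.snoc (Fin.snoc (fun _ ↦ b 1) (b 0)) (b 0)) = 0 :=
      hA.apply_eq_zero_of_curryLeft_eq_zero (i := Fin.last _) (by simpa using h)
    simpa [hs1, h0, Fin.sum_univ_two] using htr fun _ ↦ b 1

lemma IsSymmMultilinear.eq_zero_of_isTraceFree
    {A : MultilinearMap R (fun _ : Fin (n + 2) ↦ M) N} (hA : IsSymmMultilinear A)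
    (b : Module.Basis (Fin 2) R M) (htr : IsTraceFree b A)
    (h : ∀ w, A (Fin.snoc (fun _ ↦ b 0) w) = 0) : A = 0 := by
  -- Both hypotheses on `A` pass to `A.curryLeft (b 0)`, which therefore vanishes by induction.
  induction n with
  | zero =>
    refine hA.eq_zero_of_isTraceFree_of_curryLeft_eq_zero b htr ?_
    refine MultilinearMap.ext fun m ↦ ?_
    have hm : (Fin.cons (b 0) m : Fin 2 → M) = Fin.snoc (fun _ ↦ b 0) (m 0) := by
      funext i
      fin_cases i <;> rfl
    rw [MultilinearMap.curryLeft_apply, hm, h, zero_apply]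
  | succ n ih =>
    refine hA.eq_zero_of_isTraceFree_of_curryLeft_eq_zero b htr ?_
    refine ih (hA.curryLeft _) (htr.curryLeft _) fun w ↦ ?_
    have hconst : (Fin.cons (b 0) fun _ ↦ b 0 : Fin (n + 2) → M) = fun _ ↦ b 0 :=
      Fin.cons_self_tail fun _ ↦ b 0
    rw [MultilinearMap.curryLeft_apply, Fin.cons_snoc_eq_snoc_cons, hconst, h]

end SymmetricMultilinear

section ZeroSets

variable {𝕜 E F : Type*} [NontriviallyNormedField 𝕜] [NormedAddCommGroup E] [NormedSpace 𝕜 E]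
  [NormedAddCommGroup F] [NormedSpace 𝕜 F]

lemma exists_ne_zero_fderiv_apply_eq_zero_of_accPt [ProperSpace E] {f : E → F} {z : E} {c : F}
    (hf : DifferentiableAt 𝕜 f z) (hz : AccPt z (𝓟 (f ⁻¹' {c}))) :
    ∃ v ≠ 0, fderiv 𝕜 f z v = 0 := by
  obtain ⟨v, hv, hv0⟩ := tangentConeAt_nonempty_of_properSpace (𝕜 := 𝕜) hz
  refine ⟨v, hv0, ?_⟩
  have himage : fderiv 𝕜 f z v ∈ tangentConeAt 𝕜 (f '' (f ⁻¹' {c})) (f z) :=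
    hf.hasFDerivAt.hasFDerivWithinAt.mapsTo_tangent_cone hv
  refine tangentConeAt_subset_zero (fun hacc ↦ Set.Infinite.of_accPt hacc ?_) himage
  exact (finite_singleton c).subset (image_preimage_subset f {c})

variable [CharZero 𝕜] [CompleteSpace F]

lemma eventuallyEq_zero_of_iteratedFDeriv_eq_zero {f : E → F} {z : E}
    (hf : AnalyticAt 𝕜 f z) (h : ∀ n, iteratedFDeriv 𝕜 n f z = 0) : f =ᶠ[𝓝 z] 0 := by
  obtain ⟨p, r, hp⟩ := hf
  filter_upwards [eball_mem_nhds z hp.r_pos] with w hw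
  have hsum := hp.hasSum_iteratedFDeriv (y := w - z)
    (by simpa [mem_eball, edist_eq_enorm_sub] using hw)
  simpa [h] using hsum.tsum_eq.symm

lemma isBigO_sub_iteratedFDeriv_of_forall_lt_eq_zero {f : E → F} {z : E} {n : ℕ}
    (hf : AnalyticAt 𝕜 f z) (h : ∀ j < n, iteratedFDeriv 𝕜 j f z = 0) :
    (fun v ↦ f (z + v) - (n.factorial : 𝕜)⁻¹ • iteratedFDeriv 𝕜 n f z fun _ ↦ v) =O[𝓝 0]
      fun v ↦ ‖v‖ ^ (n + 1) := by
  obtain ⟨p, r, hp⟩ := hf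
  have hcoeff (j : ℕ) (v : E) :
      p j (fun _ ↦ v) = (j.factorial : 𝕜)⁻¹ • iteratedFDeriv 𝕜 j f z fun _ ↦ v := by
    rw [← hp.factorial_smul, ← Nat.cast_smul_eq_nsmul 𝕜,
      inv_smul_smul₀ (Nat.cast_ne_zero.2 j.factorial_ne_zero)]
  refine (hp.hasFPowerSeriesAt.isBigO_sub_partialSum_pow (n + 1)).congr_left fun v ↦ ?_
  rw [FormalMultilinearSeries.partialSum, Finset.sum_range_succ, Finset.sum_eq_zero, zero_add,
    hcoeff]
  intro j hj
  rw [hcoeff, h j (Finset.mem_range.1 hj)]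
  simp

lemma iteratedFDeriv_apply_eq_zero_of_mem_tangentConeAt {f : E → F} {z y : E} {n : ℕ}
    (hf : AnalyticAt 𝕜 f z) (hy : y ∈ tangentConeAt 𝕜 (f ⁻¹' {0}) z)
    (h : ∀ j < n, iteratedFDeriv 𝕜 j f z = 0) : iteratedFDeriv 𝕜 n f z (fun _ ↦ y) = 0 := by
  obtain ⟨α, l, _, c, d, hd, hzero, hcd⟩ := exists_fun_of_mem_tangentConeAt hy
  set D := iteratedFDeriv 𝕜 n f z
  have hfac : (n.factorial : 𝕜)⁻¹ ≠ 0 := inv_ne_zero (Nat.cast_ne_zero.2 n.factorial_ne_zero)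
  have hDd : (fun i ↦ D fun _ ↦ d i) =O[l] fun i ↦ ‖d i‖ ^ (n + 1) := by
    have hO := (isBigO_sub_iteratedFDeriv_of_forall_lt_eq_zero hf h).comp_tendsto hd
    refine (Asymptotics.isBigO_const_smul_left hfac).1 (hO.neg_left.congr' ?_ .rfl)
    filter_upwards [hzero] with i hi
    simp [show f (z + d i) = 0 from hi, D]
  have hDcd : (fun i ↦ D fun _ ↦ c i • d i) =O[l] fun i ↦ ‖c i • d i‖ ^ n * ‖d i‖ := by
    have hmul := (Asymptotics.isBigO_refl (fun i ↦ c i ^ n) l).norm_right.smul hDd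
    refine hmul.congr (fun i ↦ ?_) fun i ↦ ?_
    · simp [D.map_smul_univ (fun _ ↦ c i)]
    · rw [norm_pow, norm_smul, smul_eq_mul]; ring
  have hlim0 : Tendsto (fun i ↦ D fun _ ↦ c i • d i) l (𝓝 0) :=
    hDcd.trans_tendsto (by simpa using (hcd.norm.pow n).mul hd.norm)
  have hlimy : Tendsto (fun i ↦ D fun _ ↦ c i • d i) l (𝓝 (D fun _ ↦ y)) :=
    (D.cont.tendsto _).comp (tendsto_pi_nhds.2 fun _ ↦ hcd)
  exact tendsto_nhds_unique hlimy hlim0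

end ZeroSets

lemma accPt_principal_iff_norm_sub_lt {E : Type*} [SeminormedAddCommGroup E] {s : Set E} {z : E} :
    AccPt z (𝓟 s) ↔ ∀ ε > 0, ∃ w, w ≠ z ∧ ‖w - z‖ < ε ∧ w ∈ s := by
  simp only [accPt_iff_frequently, nhds_basis_ball.frequently_iff, mem_ball_iff_norm]
  grind

section Laplacian

open Laplacian InnerProductSpace Module

variable {E F : Type*} [NormedAddCommGroup E] [InnerProductSpace ℝ E] [FiniteDimensional ℝ E]
  [NormedAddCommGroup F] [NormedSpace ℝ F]

lemma iteratedFDeriv_laplacian_apply {ι : Type*} [Fintype ι] (b : OrthonormalBasis ι ℝ E)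
    {f : E → F} {z : E} {n : ℕ} (hf : ContDiffAt ℝ (n + 2) f z) (m : Fin n → E) :
    iteratedFDeriv ℝ n (Δ f) z m =
      ∑ i, iteratedFDeriv ℝ (n + 2) f z (Fin.snoc (Fin.snoc m (b i)) (b i)) := by
  let contraction : (E →L[ℝ] E →L[ℝ] F) →L[ℝ] F := ∑ i,
    (ContinuousLinearMap.apply ℝ F (b i)).comp (ContinuousLinearMap.apply ℝ (E →L[ℝ] F) (b i))
  have hcontraction : Δ f = contraction ∘ fderiv ℝ (fderiv ℝ f) := by
    ext x
    simp [laplacian_eq_iteratedFDeriv_orthonormalBasis f b, iteratedFDeriv_two_apply, contraction]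
  have hD2 : ContDiffAt ℝ n (fderiv ℝ (fderiv ℝ f)) z := by
    exact (hf.fderiv_right (m := n + 1) (by norm_num [add_assoc])).fderiv_right le_rfl
  rw [hcontraction, contraction.iteratedFDeriv_comp_left hD2 le_rfl]
  simp [contraction, iteratedFDeriv_succ_apply_right]

lemma exists_orthonormalBasis_zero_eq_inv_norm_smul {n : ℕ} (hE : finrank ℝ E = n + 1)
    {y : E} (hy : y ≠ 0) : ∃ b : OrthonormalBasis (Fin (n + 1)) ℝ E, b 0 = ‖y‖⁻¹ • y := by
  have hortho : Orthonormal ℝ (({0} : Set (Fin (n + 1))).domRestrict fun _ ↦ ‖y‖⁻¹ • y) := by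
    refine ⟨fun _ ↦ ?_, fun i j hij ↦ (hij (Subsingleton.elim i j)).elim⟩
    simp [norm_smul, hy]
  obtain ⟨b, hb⟩ := hortho.exists_orthonormalBasis_extension_of_card_eq (by simpa using hE)
  exact ⟨b, hb 0 rfl⟩

variable [CompleteSpace F]

lemma iteratedFDeriv_add_two_eq_zero_of_laplacian (hE : finrank ℝ E = 2) {u : E → F}
    {z y : E} {n : ℕ} (hu : AnalyticAt ℝ u z) (hΔ : iteratedFDeriv ℝ n (Δ u) z = 0) (hy : y ≠ 0)
    (hDy : iteratedFDeriv ℝ (n + 1) (fderiv ℝ u) z (fun _ ↦ y) = 0) :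
    iteratedFDeriv ℝ (n + 2) u z = 0 := by
  obtain ⟨b, hb⟩ := exists_orthonormalBasis_zero_eq_inv_norm_smul hE hy
  have hsymm : IsSymmMultilinear (iteratedFDeriv ℝ (n + 2) u z).toMultilinearMap :=
    fun v σ ↦ hu.contDiffAt.iteratedFDeriv_comp_perm v σ
  have htrace : IsTraceFree b.toBasis (iteratedFDeriv ℝ (n + 2) u z).toMultilinearMap := by
    intro m
    simpa [hΔ] using (iteratedFDeriv_laplacian_apply b hu.contDiffAt m).symm
  refine ContinuousMultilinearMap.toMultilinearMap_injective
    (hsymm.eq_zero_of_isTraceFree b.toBasis htrace fun w ↦ ?_)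
  have hDb : iteratedFDeriv ℝ (n + 1) (fderiv ℝ u) z (fun _ ↦ b 0) = 0 := by
    rw [hb, ContinuousMultilinearMap.map_smul_univ _ (fun _ ↦ ‖y‖⁻¹) fun _ ↦ y, hDy, smul_zero]
  simp [iteratedFDeriv_succ_apply_right (n := n + 1), hDb]

lemma eventuallyEq_zero_of_laplacian_eq_smul_of_accPt_critical (hE : finrank ℝ E = 2)
    {u : E → F} {z : E} {c : ℝ} (hu : AnalyticAt ℝ u z) (hΔ : Δ u =ᶠ[𝓝 z] c • u) (hz : u z = 0)
    (hcrit : AccPt z (𝓟 (fderiv ℝ u ⁻¹' {0}))) : u =ᶠ[𝓝 z] 0 := by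
  obtain ⟨y, hy, hy0⟩ := tangentConeAt_nonempty_of_properSpace (𝕜 := ℝ) hcrit
  have hleading (n : ℕ) (h : ∀ j < n, iteratedFDeriv ℝ (j + 1) u z = 0) :
      iteratedFDeriv ℝ n (fderiv ℝ u) z (fun _ ↦ y) = 0 :=
    iteratedFDeriv_apply_eq_zero_of_mem_tangentConeAt hu.fderiv hy fun j hj ↦ by
      rw [← norm_eq_zero, norm_iteratedFDeriv_fderiv, h j hj, norm_zero]
  refine eventuallyEq_zero_of_iteratedFDeriv_eq_zero hu fun n ↦ ?_
  induction n using Nat.strong_induction_on with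
  | _ n ih =>
    match n, ih with
    | 0, _ => ext; simp [hz]
    | 1, _ =>
      have hfderiv : fderiv ℝ u z = 0 := by simpa using hleading 0 (by simp)
      ext; simp [hfderiv]
    | n + 2, ih =>
      refine iteratedFDeriv_add_two_eq_zero_of_laplacian hE hu ?_ hy0
        (hleading (n + 1) fun j hj ↦ ih (j + 1) (by lia))
      rw [(hΔ.iteratedFDeriv ℝ n).eq_of_nhds, iteratedFDeriv_const_smul_apply hu.contDiffAt,
        ih n (by lia), smul_zero]

theorem nonisolated_critical_point_semidegenerate_general (hE : finrank ℝ E = 2)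
    {U : Set E} (hUo : IsOpen U) (hUconn : IsPreconnected U) {lam : ℝ} (hlam : lam ≠ 0)
    {u : E → F} (hu : AnalyticOnNhd ℝ u U) (hne : ∃ z ∈ U, u z ≠ 0)
    (heq : ∀ z ∈ U, Δ u z + lam • u z = 0) {z₀ : E} (hz₀ : z₀ ∈ U)
    (hcrit : AccPt z₀ (𝓟 (fderiv ℝ u ⁻¹' {0}))) :
    Δ u z₀ ≠ 0 ∧ ∃ v ≠ 0, ∀ w, iteratedFDeriv ℝ 2 u z₀ ![v, w] = 0 := by
  constructor
  · intro hΔz₀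
    have hΔ : Δ u =ᶠ[𝓝 z₀] -lam • u := by
      filter_upwards [hUo.mem_nhds hz₀] with z hz
      simpa using eq_neg_of_add_eq_zero_left (heq z hz)
    have huz₀ : u z₀ = 0 := by simpa [hΔz₀, hlam] using heq z₀ hz₀
    have hlocal := eventuallyEq_zero_of_laplacian_eq_smul_of_accPt_critical hE (hu z₀ hz₀) hΔ
      huz₀ hcrit
    obtain ⟨z, hz, huz⟩ := hne
    exact huz (hu.eqOn_zero_of_preconnected_of_eventuallyEq_zero hUconn hz₀ hlocal hz)
  · obtain ⟨v, hv, hDv⟩ :=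
      exists_ne_zero_fderiv_apply_eq_zero_of_accPt (hu z₀ hz₀).fderiv.differentiableAt hcrit
    exact ⟨v, hv, fun w ↦ by simp [iteratedFDeriv_two_apply, hDv]⟩

lemma lap_eq_laplacian (u : E2 → ℝ) : lap u = Δ u := by
  ext z
  simp [lap, laplacian_eq_iteratedFDeriv_orthonormalBasis u (EuclideanSpace.basisFun (Fin 2) ℝ),
    iteratedFDeriv_two_apply]

end Laplacian

/-- A nonisolated critical point `z₀` of the eigenfunction `u` is semi-degenerate:
`Δu(z₀) ≠ 0` while the second derivative of `u` at `z₀` is a degenerate bilinear form. -/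
theorem nonisolated_critical_point_semidegenerate
    (Ω U : Set E2) (hΩne : Ω.Nonempty) (hΩo : IsOpen Ω)
    (hΩb : Bornology.IsBounded Ω)
    (hUo : IsOpen U) (hUconn : IsConnected U) (hsub : closure Ω ⊆ U)
    (lam : ℝ) (hlam : 0 < lam)
    (u : E2 → ℝ) (hu : AnalyticOnNhd ℝ u U)
    (hne : ∃ z ∈ U, u z ≠ 0)
    (heq : ∀ z ∈ U, lap u z + lam * u z = 0)
    (z₀ : E2) (hz₀ : z₀ ∈ Ω) (hg0 : gradient u z₀ = 0)
    (hnoniso : ∀ ε > 0, ∃ w, w ≠ z₀ ∧ ‖w - z₀‖ < ε ∧ gradient u w = 0) :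
    lap u z₀ ≠ 0 ∧
      ∃ v : E2, v ≠ 0 ∧ ∀ w : E2, iteratedFDeriv ℝ 2 u z₀ ![v, w] = 0 := by
  rw [lap_eq_laplacian] at heq ⊢
  have hcrit : AccPt z₀ (𝓟 (fderiv ℝ u ⁻¹' {0})) :=
    accPt_principal_iff_norm_sub_lt.2 (by simpa [gradient] using hnoniso)
  exact nonisolated_critical_point_semidegenerate_general (by simp) hUo hUconn.isPreconnected
    hlam.ne' hu hne heq (hsub (subset_closure hz₀)) hcrit
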